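/- Let $X \cong \mathrm{Aut}(\mathrm{PSL}_3(2^a))$ with $a \ge 2$, let $S \in \mathrm{Syl}_2(X)$, and let $T = S \cap F^*(X)$ (so $T$ is a Sylow 2-subgroup of $\mathrm{PSL}_3(2^a)$). If $U \le S$ with $U \cong T$, then $U = T$. -/

import Mathlib

def fittingSubgroup (G : Type*) [Group G] : Subgroup G :=
  sSup {N : Subgroup G | N.Normal ∧ Group.IsNilpotent N}

def IsSubnormal {G : Type*} [Group G] (K : Subgroup G) : Prop :=
  Relation.ReflTransGen
    (fun A B : Subgroup G => A ≤ B ∧ ∀ b ∈ B, ∀ a ∈ A, b * a * b⁻¹ ∈ A) K ⊤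

def IsQuasisimple {G : Type*} [Group G] (L : Subgroup G) : Prop :=
  commutator ↥L = ⊤ ∧ IsSimpleGroup (↥L ⧸ Subgroup.center ↥L)

def IsComponent {G : Type*} [Group G] (L : Subgroup G) : Prop :=
  IsSubnormal L ∧ IsQuasisimple L

def layerSub (G : Type*) [Group G] : Subgroup G :=
  sSup {L : Subgroup G | IsComponent L}

/-- `F^*(G)`, the generalized Fitting subgroup. -/
def genFitting (G : Type*) [Group G] : Subgroup G :=
  fittingSubgroup G ⊔ layerSub G

/-- `PSL₃(2^a)`. -/
noncomputable abbrev PSL3 (a : ℕ) :=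
  Matrix.ProjectiveSpecialLinearGroup (Fin 3) (GaloisField 2 a)

/-! Write `q = 2 ^ a` and `G = PSL₃(q)`. As `G` is simple, `F^*(Aut G)` is the group of inner
automorphisms. The group `T` is generated by its two elementary abelian subgroups of order `q ^ 2`,
so it suffices that every elementary abelian subgroup `A` of order `q ^ 2` of `Aut G` consists of
inner automorphisms. We may assume that `A` normalises `T`. An automorphism preserving both
elementary abelian subgroups of `T` acts on `T` semilinearly over some field automorphism `σ`, and
an involution with `σ = 1` is inner; since `𝔽_q` has at most one field automorphism of order two,
the inner part of `A` has index at most two in the part of `A` preserving the two subgroups. If `A`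
has an element with `σ ≠ 1`, or one swapping the two subgroups, then `A` being commutative forces
its inner part to consist of fixed points of that element: at most `q` of them in either case, and
at most `√q` if both kinds of elements occur. As `q ≥ 4`, this contradicts `|A| = q ^ 2`.
-/

section GeneralizedFitting

variable {X : Type*} [Group X] {L K : Subgroup X}

theorem isSubnormal_of_normal (hK : K.Normal) : IsSubnormal K :=
  Relation.ReflTransGen.single ⟨le_top, fun b _ a ha ↦ hK.conj_mem a ha b⟩

theorem IsSubnormal.eq_bot_or_le [hL : L.Normal] [IsSimpleGroup L]
    (hC : Subgroup.centralizer (L : Set X) = ⊥) (hK : IsSubnormal K) : K = ⊥ ∨ L ≤ K := by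
  induction hK using Relation.ReflTransGen.head_induction_on with
  | refl => exact .inr le_top
  | @head A B hAB _ ih =>
    obtain ⟨hle, hconj⟩ := hAB
    obtain rfl | hLB := ih
    · exact .inl (le_bot_iff.mp hle)
    have hnormal : (A.subgroupOf L).Normal :=
      ⟨fun a ha l ↦ hconj l (hLB l.2) a ha⟩
    obtain hbot | htop := hnormal.eq_bot_or_eq_top
    · left
      rw [eq_bot_iff, ← hC, ← Subgroup.commutator_eq_bot_iff_le_centralizer, eq_bot_iff,
        ← (Subgroup.subgroupOf_eq_bot.mp hbot).eq_bot, Subgroup.commutator_le]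
      refine fun a ha l hl ↦ Subgroup.mem_inf.mpr ⟨?_, mul_mem (hL.conj_mem l hl a) (inv_mem hl)⟩
      simpa only [commutatorElement_def, mul_assoc] using
        mul_mem ha (hconj l (hLB hl) _ (inv_mem ha))
    · exact .inr (Subgroup.subgroupOf_eq_top.mp htop)

theorem center_eq_bot_of_centralizer_eq_bot (hC : Subgroup.centralizer (L : Set X) = ⊥)
    (hLK : L ≤ K) : Subgroup.center K = ⊥ := by
  refine (Subgroup.eq_bot_iff_forall _).mpr fun x hx ↦ Subtype.ext ?_
  have hmem : (x : X) ∈ Subgroup.centralizer (L : Set X) := fun l hl ↦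
    congrArg Subtype.val (Subgroup.mem_center_iff.mp hx ⟨l, hLK hl⟩)
  rwa [hC] at hmem

theorem isSimpleGroup_quotient_center_iff {G : Type*} [Group G]
    (hG : Subgroup.center G = ⊥) : IsSimpleGroup (G ⧸ Subgroup.center G) ↔ IsSimpleGroup G :=
  have e : G ⧸ Subgroup.center G ≃* G :=
    (QuotientGroup.quotientMulEquivOfEq hG).trans QuotientGroup.quotientBot
  ⟨fun _ ↦ e.symm.isSimpleGroup, fun _ ↦ e.isSimpleGroup⟩

theorem isPerfect_of_isSimpleGroup {G : Type*} [Group G] [IsSimpleGroup G]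
    (hG : Subgroup.center G = ⊥) : Group.IsPerfect G := by
  refine ⟨(Subgroup.Normal.eq_bot_or_eq_top inferInstance).resolve_left fun h ↦ ?_⟩
  rw [commutator_eq_bot_iff_center_eq_top, hG] at h
  exact bot_ne_top h

theorem genFitting_eq_of_centralizer_eq_bot [hL : L.Normal] [IsSimpleGroup L]
    (hC : Subgroup.centralizer (L : Set X) = ⊥) : genFitting X = L := by
  have hcenter : Subgroup.center L = ⊥ := center_eq_bot_of_centralizer_eq_bot hC le_rfl
  have hperfect : Group.IsPerfect L := isPerfect_of_isSimpleGroup hcenter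
  refine le_antisymm (sup_le (sSup_le ?_) (sSup_le ?_)) (le_sup_of_le_right (le_sSup ?_))
  · rintro N ⟨hN, hnil⟩
    refine ((isSubnormal_of_normal hN).eq_bot_or_le hC).elim (fun h ↦ h ▸ bot_le) fun hLN ↦ ?_
    have : Group.IsNilpotent L :=
      (Group.isNilpotent_congr (Subgroup.subgroupOfEquivOfLe hLN)).mp inferInstance
    exact absurd this (Group.IsPerfect.not_isNilpotent L)
  · rintro K ⟨hK, -, hsimple⟩
    refine (hK.eq_bot_or_le hC).elim (fun h ↦ h ▸ bot_le) fun hLK ↦ ?_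
    have : IsSimpleGroup K :=
      (isSimpleGroup_quotient_center_iff (center_eq_bot_of_centralizer_eq_bot hC hLK)).mp hsimple
    refine Subgroup.subgroupOf_eq_top.mp
      ((Subgroup.Normal.eq_bot_or_eq_top inferInstance).resolve_left fun h ↦ ?_)
    have hLbot : L = ⊥ := by
      rwa [Subgroup.subgroupOf_eq_bot, disjoint_iff, inf_eq_left.mpr hLK] at h
    exact (Subgroup.nontrivial_iff_ne_bot L).mp inferInstance hLbot
  · exact ⟨isSubnormal_of_normal hL, hperfect.commutator_eq_top,
      (isSimpleGroup_quotient_center_iff hcenter).mpr inferInstance⟩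

end GeneralizedFitting

section InnerAutomorphisms

variable {G : Type*} [Group G]

theorem mulAut_mul_conj_mul_inv (φ : MulAut G) (g : G) :
    φ * MulAut.conj g * φ⁻¹ = MulAut.conj (φ g) := by
  ext x
  simp only [MulAut.mul_apply, MulAut.conj_apply, map_mul, map_inv, MulAut.apply_inv_self]

instance normal_range_conj : (MulAut.conj (G := G)).range.Normal where
  conj_mem := by
    rintro _ ⟨g, rfl⟩ φ
    exact ⟨φ g, (mulAut_mul_conj_mul_inv φ g).symm⟩

theorem mulAut_conj_injective (hG : Subgroup.center G = ⊥) :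
    Function.Injective (MulAut.conj (G := G)) := by
  refine (injective_iff_map_eq_one _).mpr fun g hg ↦ ?_
  rw [← Subgroup.mem_bot, ← hG, Subgroup.mem_center_iff]
  exact fun h ↦ (mul_inv_eq_iff_eq_mul.mp (DFunLike.congr_fun hg h)).symm

theorem apply_eq_self_of_commute_conj (hG : Subgroup.center G = ⊥) {φ : MulAut G} {g : G}
    (h : Commute φ (MulAut.conj g)) : φ g = g :=
  mulAut_conj_injective hG (by rw [← mulAut_mul_conj_mul_inv, h.eq, mul_inv_cancel_right])

theorem genFitting_mulAut [IsSimpleGroup G] (hG : Subgroup.center G = ⊥) :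
    genFitting (MulAut G) = (MulAut.conj (G := G)).range := by
  have : IsSimpleGroup (MulAut.conj (G := G)).range :=
    (MonoidHom.ofInjective (mulAut_conj_injective hG)).symm.isSimpleGroup
  refine genFitting_eq_of_centralizer_eq_bot ((Subgroup.eq_bot_iff_forall _).mpr fun φ hφ ↦ ?_)
  ext g
  exact apply_eq_self_of_commute_conj hG (hφ _ ⟨g, rfl⟩).symm

end InnerAutomorphisms

open scoped Pointwise in
theorem comap_conj_smul {G : Type*} [Group G] (φ : MulAut G) (H : Subgroup (MulAut G)) :
    (MulAut.conj φ • H).comap MulAut.conj = φ • H.comap MulAut.conj := by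
  ext g
  rw [Subgroup.mem_comap, Subgroup.mem_pointwise_smul_iff_inv_smul_mem,
    Subgroup.mem_pointwise_smul_iff_inv_smul_mem, Subgroup.mem_comap, ← map_inv,
    MulAut.smul_def, MulAut.smul_def, MulAut.conj_apply, mulAut_mul_conj_mul_inv]

theorem commute_inv_mul_map_of_map_conj_eq {G : Type*} [Group G] {φ : MulAut G} {n t : G}
    (ht : φ t = t) (hn : φ (n * t * n⁻¹) = n * t * n⁻¹) : Commute (n⁻¹ * φ n) t := by
  have key : φ n * t * (φ n)⁻¹ = n * t * n⁻¹ := by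
    rw [← hn, map_mul, map_mul, map_inv, ht]
  rw [mul_inv_eq_iff_eq_mul] at key
  rw [Commute, SemiconjBy, mul_assoc, key]
  group

open scoped Pointwise in
theorem map_mem_iff_of_smul_eq {G : Type*} [Group G] {φ : MulAut G} {H : Subgroup G}
    (h : φ • H = H) {g : G} : φ g ∈ H ↔ g ∈ H := by
  nth_rw 1 [← h]
  exact Subgroup.smul_mem_pointwise_smul_iff

theorem card_le_two_mul_card_inf {G : Type*} [Group G] {H K : Subgroup G}
    (h : ∀ x ∈ K, x ∉ H → ∀ y ∈ K, y ∉ H → x * y ∈ H) :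
    Nat.card K ≤ 2 * Nat.card ↥(H ⊓ K) := by
  have hcard : Nat.card ↥(H ⊓ K) * H.relIndex K = Nat.card K := by
    rw [← Subgroup.inf_relIndex_right, ← Subgroup.relIndex_bot_left, ← Subgroup.relIndex_bot_left,
      Subgroup.relIndex_mul_relIndex _ _ _ bot_le inf_le_right]
  rw [← hcard, mul_comm]
  refine Nat.mul_le_mul_right _ ?_
  by_cases hKH : K ≤ H
  · rw [Subgroup.relIndex_eq_one.mpr hKH]
    exact one_le_two
  · obtain ⟨a, haK, haH⟩ := SetLike.not_le_iff_exists.mp hKH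
    refine (Subgroup.relIndex_eq_two_iff.mpr ⟨a, haK, fun b hb ↦ ?_⟩).le
    by_cases hbH : b ∈ H
    · exact Or.inr ⟨hbH, fun hba ↦ haH ((H.mul_mem_cancel_left hbH).mp hba)⟩
    · exact Or.inl ⟨h b hb hbH a haK haH, hbH⟩

theorem commute_of_forall_mul_self_eq_one {G : Type*} [Group G] {H : Subgroup G}
    (hH : ∀ g ∈ H, g * g = 1) {g h : G} (hg : g ∈ H) (hh : h ∈ H) : Commute g h := by
  have hexp (k : H) : orderOf k ∣ 2 :=
    orderOf_dvd_of_pow_eq_one (Subtype.ext ((pow_two _).trans (hH k k.2)))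
  exact congrArg Subtype.val (Commute.of_orderOf_dvd_two hexp ⟨g, hg⟩ ⟨h, hh⟩).eq

theorem exists_ringHom_of_map_mul_eq {F : Type*} [Field F] {α : F →+ F} {β γ : F → F}
    (hα : α 1 ≠ 0) (hβ : β 1 ≠ 0) (hγ : ∀ x y, γ (x * y) = α x * β y) :
    ∃ σ : F →+* F, ∀ x,
      α x = α 1 * σ x ∧ β x = β 1 * σ x ∧ γ x = α 1 * β 1 * σ x := by
  have hβα (x : F) : β x = β 1 * (α x / α 1) := by
    have h : α 1 * β x = α x * β 1 := by rw [← hγ, ← hγ, one_mul, mul_one]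
    rw [mul_div_assoc', eq_div_iff hα]
    linear_combination h
  have hmul (x y : F) : α (x * y) / α 1 = α x / α 1 * (α y / α 1) := by
    have h : α (x * y) * β 1 = α x * (β 1 * (α y / α 1)) := by
      rw [← hβα, ← hγ, ← hγ, mul_one]
    refine mul_right_cancel₀ hβ ?_
    rw [div_mul_eq_mul_div, h]
    ring
  refine ⟨{ toFun x := α x / α 1
            map_one' := div_self hα
            map_mul' := hmul
            map_zero' := by rw [map_zero, zero_div]
            map_add' x y := by rw [map_add, add_div] }, fun x ↦ ⟨?_, hβα x, ?_⟩⟩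
  · exact (mul_div_cancel₀ _ hα).symm
  · change γ x = α 1 * β 1 * (α x / α 1)
    rw [← mul_one x, hγ, mul_one]
    field_simp

theorem ringHom_eq_of_comp_self_eq_id {F : Type*} [Field F] [Finite F] {σ τ : F →+* F}
    (hσ : σ.comp σ = RingHom.id F) (hτ : τ.comp τ = RingHom.id F)
    (hσ₁ : σ ≠ RingHom.id F) (hτ₁ : τ ≠ RingHom.id F) : σ = τ := by
  classical
  obtain ⟨p, hp⟩ := CharP.exists F
  have : Fact p.Prime := ⟨CharP.char_is_prime F p⟩
  let := ZMod.algebra F p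
  let := Fintype.ofFinite Gal(F/ZMod p)
  have hgal (ρ : F →+* F) (hρ : ρ.comp ρ = RingHom.id F) :
      ∃ s : Gal(F/ZMod p), (s : F →+* F) = ρ ∧ s ^ 2 = 1 :=
    ⟨AlgEquiv.ofRingEquiv (f := RingEquiv.ofRingHom ρ ρ hρ hρ)
        fun r ↦ RingHom.congr_fun (RingHom.ext_zmod (ρ.comp (algebraMap (ZMod p) F)) _) r,
      rfl, AlgEquiv.ext fun x ↦ RingHom.congr_fun hρ x⟩
  obtain ⟨s, rfl, hs⟩ := hgal σ hσ
  obtain ⟨t, rfl, ht⟩ := hgal τ hτ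
  have hs₁ : s ≠ 1 := by rintro rfl; exact hσ₁ rfl
  have ht₁ : t ≠ 1 := by rintro rfl; exact hτ₁ rfl
  by_contra hst
  -- The cyclic group `Gal(F/𝔽_p)` has at most two solutions of `x ^ 2 = 1`.
  have hroots : ({1, s, t} : Finset Gal(F/ZMod p)) ⊆ Finset.univ.filter (· ^ 2 = 1) := by
    intro x hx
    simp only [Finset.mem_insert, Finset.mem_singleton] at hx
    rcases hx with rfl | rfl | rfl <;> simp [hs, ht]
  have hcard : ({1, s, t} : Finset Gal(F/ZMod p)).card = 3 :=
    Finset.card_eq_three.mpr ⟨1, s, t, hs₁.symm, ht₁.symm, fun h ↦ hst (by rw [h]), rfl⟩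
  have := (Finset.card_le_card hroots).trans (IsCyclic.card_pow_eq_one_le two_pos)
  omega

theorem ncard_setOf_eq_sq_le_of_semilinear {F M N : Type*} [Field F] [AddCommGroup M]
    [Module F M] [Finite M] [AddCommGroup N] [Module F N] {σ : F →+* F} (hσ : σ ≠ RingHom.id F)
    (f : M →ₛₗ[σ] N) {ι : M →ₗ[F] N} (hι : Function.Injective ι) :
    {m | f m = ι m}.ncard ^ 2 ≤ Nat.card M := by
  obtain ⟨l, hl⟩ : ∃ l, σ l ≠ l := by
    by_contra! h
    exact hσ (RingHom.ext h)
  -- If `V` is the equalizer of `f` and `ι`, then `V ∩ l V = 0`, so `V × V` embeds into `M`.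
  have hinj : Set.InjOn (fun p : M × M ↦ p.1 + l • p.2)
      ({m | f m = ι m} ×ˢ {m | f m = ι m}) := by
    rintro ⟨v, w⟩ ⟨hv : f v = ι v, hw : f w = ι w⟩ ⟨v', w'⟩ ⟨hv' : f v' = ι v', hw' : f w' = ι w'⟩
      (h : v + l • w = v' + l • w')
    have hf := congrArg f h
    have hι' := congrArg ι h
    simp only [map_add, map_smulₛₗ, hv, hw, hv', hw', RingHom.id_apply] at hf hι'
    have hsub : (σ l - l) • (ι w - ι w') = 0 := by
      linear_combination (norm := module) hf - hι'
    obtain rfl : w = w' :=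
      hι (sub_eq_zero.mp ((smul_eq_zero.mp hsub).resolve_left (sub_ne_zero.mpr hl)))
    rw [add_right_cancel h]
  rw [pow_two, ← Set.ncard_prod, ← hinj.ncard_image]
  exact Set.ncard_le_card _

section Simplicity

open Matrix Matrix.SpecialLinearGroup
open scoped commutatorElement LinearAlgebra.Projectivization

variable {ι F : Type*} [Fintype ι] [DecidableEq ι] [Field F]

theorem diag2n_eq_transvection_prod {i j : ι} (hij : i ≠ j) (a : F) (ha : a ≠ 0) :
    diag2n hij a ha = SpecialLinearGroup.transvection hij a *
      SpecialLinearGroup.transvection hij.symm (-a⁻¹) *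
      SpecialLinearGroup.transvection hij a *
      SpecialLinearGroup.transvection hij (-1) *
      SpecialLinearGroup.transvection hij.symm 1 *
      SpecialLinearGroup.transvection hij (-1) := by
  apply Subtype.ext
  simp only [coe_mul, transvection_coe, diag2n_coe, mul_add, add_mul, one_mul, mul_one,
    single_mul_single_same, single_mul_single_of_ne _ _ _ _ hij,
    single_mul_single_of_ne _ _ _ _ hij.symm]
  ext k l
  simp only [diagonal_apply, single_apply, one_apply, Matrix.add_apply, mul_neg, neg_mul,
    mul_inv_cancel₀ ha, inv_mul_cancel₀ ha, mul_one, one_mul, neg_neg, zero_mul, add_zero]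
  grind

theorem transvection_eq_commutator {i j k : ι} (hij : i ≠ j) (hik : i ≠ k) (hkj : k ≠ j) (c : F) :
    SpecialLinearGroup.transvection hij c =
      ⁅SpecialLinearGroup.transvection hik c, SpecialLinearGroup.transvection hkj 1⁆ := by
  rw [commutatorElement_def, SpecialLinearGroup.transvection_inv,
    SpecialLinearGroup.transvection_inv]
  apply Subtype.ext
  simp only [coe_mul, transvection_coe, mul_add, add_mul, one_mul, mul_one,
    single_mul_single_same, single_mul_single_of_ne _ _ _ _ hij.symm,
    single_mul_single_of_ne _ _ _ _ hik.symm, single_mul_single_of_ne _ _ _ _ hkj.symm,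
    ← single_neg, mul_neg, neg_mul, zero_mul]
  abel

theorem eq_top_of_forall_transvection_mem [Nontrivial ι] (H : Subgroup (SpecialLinearGroup ι F))
    (h : ∀ (i j : ι) (hij : i ≠ j) (a : F), SpecialLinearGroup.transvection hij a ∈ H) :
    H = ⊤ := by
  refine eq_top_iff.mpr fun M _ ↦
    diagonal_transvection_induction' (· ∈ H) M (fun i j hij c hc ↦ ?_) h fun _ _ ↦ mul_mem
  rw [diag2n_eq_transvection_prod]
  exact mul_mem (mul_mem (mul_mem (mul_mem (mul_mem (h _ _ _ _) (h _ _ _ _)) (h _ _ _ _))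
    (h _ _ _ _)) (h _ _ _ _)) (h _ _ _ _)

theorem isPerfect_specialLinearGroup (hι : 3 ≤ Fintype.card ι) :
    Group.IsPerfect (SpecialLinearGroup ι F) := by
  have : Nontrivial ι := Fintype.one_lt_card_iff_nontrivial.mp (by omega)
  refine ⟨eq_top_of_forall_transvection_mem _ fun i j hij a ↦ ?_⟩
  obtain ⟨k, hk⟩ := Finset.exists_mem_notMem_of_card_lt_card
    (s := {i, j}) (t := (Finset.univ : Finset ι)) (Finset.card_le_two.trans_lt hι)
  simp only [Finset.mem_insert, Finset.mem_singleton, not_or] at hk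
  rw [transvection_eq_commutator hij (Ne.symm hk.2.1) hk.2.2]
  exact Subgroup.commutator_mem_commutator (Subgroup.mem_top _) (Subgroup.mem_top _)

theorem center_projectiveSpecialLinearGroup (hι : 3 ≤ Fintype.card ι) :
    Subgroup.center (ProjectiveSpecialLinearGroup ι F) = ⊥ :=
  have := isPerfect_specialLinearGroup (F := F) hι
  Group.IsPerfect.center_quotient_center_eq_bot _

theorem iSup_lineStab_eq_top [Nontrivial ι] :
    (⨆ p : ℙ F (ι → F), lineStab p.submodule) = ⊤ := by
  refine eq_top_of_forall_transvection_mem _ fun i j hij a ↦ ?_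
  have h := SL2Gen.transvection_mem_lineStab (F := F) hij a
  rw [← Projectivization.submodule_mk (K := F) _ (Pi.single_ne_zero_iff.2 one_ne_zero)] at h
  exact le_iSup (fun p : ℙ F (ι → F) ↦ lineStab p.submodule) _ h

/-- The Iwasawa structure of `PSL` on the projective space: to a point corresponds the group of
transvections with that centre. -/
noncomputable def projectiveIwasawaStructure [Nontrivial ι] :
    MulAction.IwasawaStructure (ProjectiveSpecialLinearGroup ι F) (ℙ F (ι → F)) where
  T := PSL.iwasawaT
  is_comm p := by
    have : IsMulCommutative (lineStab (F := F) (ι := ι) p.submodule) := by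
      rw [← Projectivization.mk_rep p, Projectivization.submodule_mk]
      exact lineStab_isMulCommutative_of_span p.rep p.rep_nonzero
    exact Subgroup.map_isMulCommutative _ _
  is_conj g p := by
    obtain ⟨A, rfl⟩ := QuotientGroup.mk_surjective g
    rw [ProjectiveSpecialLinearGroup.smul_proj_mk]
    change Subgroup.map _ _ = _
    rw [PSL.smul_submodule, lineStab_smul, PSL.iwasawaT_map_conj]
  is_generator := by
    change ⨆ p : ℙ F (ι → F), Subgroup.map _ (lineStab p.submodule) = ⊤
    rw [← Subgroup.map_iSup, iSup_lineStab_eq_top]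
    exact Subgroup.map_top_of_surjective _ (QuotientGroup.mk'_surjective _)

theorem isSimpleGroup_projectiveSpecialLinearGroup (hι : 3 ≤ Fintype.card ι) :
    IsSimpleGroup (ProjectiveSpecialLinearGroup ι F) := by
  have : Nontrivial ι := Fintype.one_lt_card_iff_nontrivial.mp (by omega)
  have := isPerfect_specialLinearGroup (F := F) hι
  have : Group.IsPerfect (ProjectiveSpecialLinearGroup ι F) := by
    unfold ProjectiveSpecialLinearGroup; infer_instance
  exact MulAction.IwasawaStructure.isSimpleGroup this.commutator_eq_top
    projectiveIwasawaStructure inferInstance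

end Simplicity

namespace PSL3

open Matrix Matrix.SpecialLinearGroup Equiv
open scoped MatrixGroups Pointwise

section Unitriangular

variable {F : Type*} [Field F]

/-- The projection of `SL(3, F)` onto `PSL(3, F)`. -/
def proj : SL(3, F) →* PSL(3, F) := QuotientGroup.mk' _

theorem proj_surjective : Function.Surjective (proj (F := F)) := QuotientGroup.mk'_surjective _

theorem proj_eq_proj_iff {A B : SL(3, F)} :
    proj A = proj B ↔
      ∃ r : F, (B : Matrix (Fin 3) (Fin 3) F) = r • (A : Matrix (Fin 3) (Fin 3) F) := by
  have hscalar (r : F) : scalar (Fin 3) r = (A⁻¹ * B : SL(3, F)) ↔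
      (B : Matrix (Fin 3) (Fin 3) F) = r • (A : Matrix (Fin 3) (Fin 3) F) := by
    rw [scalar_apply, ← smul_one_eq_diagonal]
    refine ⟨fun h ↦ ?_, fun h ↦ ?_⟩
    · rw [← mul_inv_cancel_left A B, coe_mul A, ← h, mul_smul_comm, mul_one]
    · rw [coe_mul, h, mul_smul_comm, ← coe_mul, inv_mul_cancel, coe_one]
  change (A : PSL(3, F)) = B ↔ _
  rw [QuotientGroup.eq, mem_center_iff]
  simp only [hscalar]
  refine ⟨fun ⟨r, _, h⟩ ↦ ⟨r, h⟩, fun ⟨r, h⟩ ↦ ⟨r, ?_, h⟩⟩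
  simpa only [det_smul, det_coe, mul_one, eq_comm] using congrArg det h

/-- The upper unitriangular matrix with `x`, `y` above the diagonal and `z` in the corner. -/
def unitriSL (x y z : F) : SL(3, F) :=
  ⟨!![1, x, z; 0, 1, y; 0, 0, 1], by simp [det_fin_three]⟩

/-- The class in `PSL(3, F)` of the upper unitriangular matrix with `x`, `y` above the diagonal
and `z` in the corner. -/
def unitri (x y z : F) : PSL(3, F) := proj (unitriSL x y z)

theorem coe_unitriSL (x y z : F) :
    (unitriSL x y z : Matrix (Fin 3) (Fin 3) F) = !![1, x, z; 0, 1, y; 0, 0, 1] := rfl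

theorem unitri_mul (x y z x' y' z' : F) :
    unitri x y z * unitri x' y' z' = unitri (x + x') (y + y') (z + z' + x * y') := by
  refine (map_mul proj _ _).symm.trans (congrArg proj (Subtype.ext ?_))
  rw [coe_mul, coe_unitriSL, coe_unitriSL, coe_unitriSL, mul_fin_three]
  congr! 3 <;> ring_nf

theorem unitri_zero : unitri (0 : F) 0 0 = 1 :=
  (congrArg proj (Subtype.ext one_fin_three.symm)).trans (map_one proj)

theorem unitri_inv (x y z : F) : (unitri x y z)⁻¹ = unitri (-x) (-y) (x * y - z) :=
  inv_eq_of_mul_eq_one_right (by rw [unitri_mul, ← unitri_zero]; congr 1 <;> ring)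

theorem unitri_inj {x y z x' y' z' : F} :
    unitri x y z = unitri x' y' z' ↔ x = x' ∧ y = y' ∧ z = z' := by
  refine ⟨fun h ↦ ?_, by rintro ⟨rfl, rfl, rfl⟩; rfl⟩
  obtain ⟨r, hr⟩ := proj_eq_proj_iff.mp h
  have entry (i j : Fin 3) := congrFun (congrFun hr i) j
  obtain rfl : r = 1 := by simpa [coe_unitriSL, eq_comm] using entry 0 0
  rw [one_smul] at entry
  exact ⟨(entry 0 1).symm, (entry 1 2).symm, (entry 0 2).symm⟩

theorem mul_strictUpper_eq_of_proj_mul_unitri_eq {g : SL(3, F)} {x y z x' y' z' : F}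
    (h : proj g * unitri x y z = unitri x' y' z' * proj g) :
    (g : Matrix (Fin 3) (Fin 3) F) * !![0, x, z; 0, 0, y; 0, 0, 0] =
      !![0, x', z'; 0, 0, y'; 0, 0, 0] * (g : Matrix (Fin 3) (Fin 3) F) := by
  rw [unitri, unitri, ← map_mul, ← map_mul] at h
  obtain ⟨r, hr⟩ := proj_eq_proj_iff.mp h
  have unipotent (x y z : F) : (unitriSL x y z : Matrix (Fin 3) (Fin 3) F) =
      1 + !![0, x, z; 0, 0, y; 0, 0, 0] := by
    simp [coe_unitriSL, one_fin_three]
  -- Taking determinants in `u' * g - g = r • (g * u) - g` gives `0 = (r - 1) ^ 3`.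
  have hdet_left : (unitriSL x' y' z' - 1 : Matrix (Fin 3) (Fin 3) F).det = 0 := by
    rw [unipotent, add_sub_cancel_left, det_fin_three]
    simp
  have hdet_right : (r • unitriSL x y z - 1 : Matrix (Fin 3) (Fin 3) F).det = (r - 1) ^ 3 := by
    rw [coe_unitriSL, one_fin_three, det_fin_three]
    simp [pow_three, mul_assoc]
  have hdet : (r - 1) ^ 3 = 0 :=
    calc (r - 1) ^ 3
        = (g : Matrix (Fin 3) (Fin 3) F).det *
            (r • unitriSL x y z - 1 : Matrix (Fin 3) (Fin 3) F).det := by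
          rw [hdet_right, det_coe, one_mul]
      _ = (r • (g * unitriSL x y z : SL(3, F)) - g : Matrix (Fin 3) (Fin 3) F).det := by
          rw [← det_mul, mul_sub, mul_smul_comm, mul_one, coe_mul]
      _ = ((unitriSL x' y' z' - 1 : Matrix (Fin 3) (Fin 3) F) * g).det := by
          rw [← hr, coe_mul, sub_one_mul]
      _ = 0 := by rw [det_mul, hdet_left, zero_mul]
  obtain rfl : r = 1 := sub_eq_zero.mp (pow_eq_zero_iff three_ne_zero |>.mp hdet)
  rw [one_smul, coe_mul, coe_mul, unipotent, unipotent, mul_add, add_mul, mul_one, one_mul] at hr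
  exact (add_left_cancel hr).symm

variable (F) in
/-- The group `T` of (classes of) unitriangular matrices. -/
def unitriSubgroup : Subgroup PSL(3, F) where
  carrier := Set.range fun p : F × F × F ↦ unitri p.1 p.2.1 p.2.2
  mul_mem' := by
    rintro _ _ ⟨p, rfl⟩ ⟨q, rfl⟩
    exact ⟨(_, _, _), (unitri_mul ..).symm⟩
  one_mem' := ⟨0, unitri_zero⟩
  inv_mem' := by
    rintro _ ⟨p, rfl⟩
    exact ⟨(_, _, _), (unitri_inv ..).symm⟩

variable (F) in
/-- The subgroup of `T` of the matrices whose only entries above the diagonal are in the last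
column: one of the two elementary abelian subgroups of `T` of order `|F|²`. -/
def lastColSubgroup : Subgroup PSL(3, F) where
  carrier := Set.range fun p : F × F ↦ unitri 0 p.1 p.2
  mul_mem' := by
    rintro _ _ ⟨p, rfl⟩ ⟨q, rfl⟩
    exact ⟨p + q, by simp [unitri_mul]⟩
  one_mem' := ⟨0, unitri_zero⟩
  inv_mem' := by
    rintro _ ⟨p, rfl⟩
    exact ⟨-p, by simp [unitri_inv]⟩

variable (F) in
/-- The subgroup of `T` of the matrices whose only entries above the diagonal are in the first
row: the other elementary abelian subgroup of `T` of order `|F|²`. -/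
def firstRowSubgroup : Subgroup PSL(3, F) where
  carrier := Set.range fun p : F × F ↦ unitri p.1 0 p.2
  mul_mem' := by
    rintro _ _ ⟨p, rfl⟩ ⟨q, rfl⟩
    exact ⟨p + q, by simp [unitri_mul]⟩
  one_mem' := ⟨0, unitri_zero⟩
  inv_mem' := by
    rintro _ ⟨p, rfl⟩
    exact ⟨-p, by simp [unitri_inv]⟩

theorem unitri_mem_unitriSubgroup (x y z : F) : unitri x y z ∈ unitriSubgroup F :=
  ⟨(x, y, z), rfl⟩

theorem unitri_mem_lastColSubgroup {x y z : F} : unitri x y z ∈ lastColSubgroup F ↔ x = 0 :=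
  ⟨fun ⟨_, h⟩ ↦ (unitri_inj.mp h).1.symm, fun h ↦ ⟨(y, z), by rw [h]⟩⟩

theorem unitri_mem_firstRowSubgroup {x y z : F} : unitri x y z ∈ firstRowSubgroup F ↔ y = 0 :=
  ⟨fun ⟨_, h⟩ ↦ (unitri_inj.mp h).2.1.symm, fun h ↦ ⟨(x, z), by rw [h]⟩⟩

theorem exists_unitri_eq_of_mem_inf {g : PSL(3, F)}
    (hg : g ∈ lastColSubgroup F ⊓ firstRowSubgroup F) : ∃ z, unitri 0 0 z = g := by
  obtain ⟨⟨p, rfl⟩, hp⟩ := hg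
  exact ⟨p.2, congrArg (unitri 0 · p.2) (unitri_mem_firstRowSubgroup.mp hp).symm⟩

theorem commute_single_of_commute_unitri {g : SL(3, F)} {x y z : F} {i j : Fin 3}
    (hij : single i j 1 = !![0, x, z; 0, 0, y; 0, 0, 0])
    (h : Commute (proj g) (unitri x y z)) :
    Commute (single i j 1) (g : Matrix (Fin 3) (Fin 3) F) := by
  rw [hij]
  exact (mul_strictUpper_eq_of_proj_mul_unitri_eq h).symm

theorem proj_eq_unitri {g : SL(3, F)} {r : F}
    (h₀ : g 0 0 = r) (h₁ : g 1 1 = r) (h₂ : g 2 2 = r)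
    (h₁₀ : g 1 0 = 0) (h₂₀ : g 2 0 = 0) (h₂₁ : g 2 1 = 0) :
    proj g = unitri (g 0 1 / r) (g 1 2 / r) (g 0 2 / r) := by
  have hr : r ≠ 0 := by
    rintro rfl
    refine one_ne_zero ((det_coe g).symm.trans ?_)
    rw [det_fin_three, h₀, h₁, h₂, h₁₀, h₂₀]
    ring
  refine (proj_eq_proj_iff.mpr ⟨r, ?_⟩).symm
  rw [coe_unitriSL]
  ext i j
  fin_cases i <;> fin_cases j <;> simp [*, mul_div_cancel₀]

theorem centralizer_lastColSubgroup :
    Subgroup.centralizer (lastColSubgroup F : Set PSL(3, F)) = lastColSubgroup F := by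
  refine le_antisymm (fun k hk ↦ ?_) ?_
  · obtain ⟨g, rfl⟩ := proj_surjective k
    have hcomm (y z : F) : Commute (proj g) (unitri 0 y z) := (hk _ ⟨(y, z), rfl⟩).symm
    have h₀₂ : Commute (single 0 2 1) (g : Matrix (Fin 3) (Fin 3) F) :=
      commute_single_of_commute_unitri (by ext i j; fin_cases i <;> fin_cases j <;> rfl)
        (hcomm 0 1)
    have h₁₂ : Commute (single 1 2 1) (g : Matrix (Fin 3) (Fin 3) F) :=
      commute_single_of_commute_unitri (by ext i j; fin_cases i <;> fin_cases j <;> rfl)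
        (hcomm 1 0)
    rw [proj_eq_unitri (diag_eq_of_commute_single h₀₂) (diag_eq_of_commute_single h₁₂) rfl
      (col_eq_zero_of_commute_single h₀₂ (by decide))
      (col_eq_zero_of_commute_single h₀₂ (by decide))
      (col_eq_zero_of_commute_single h₁₂ (by decide)), unitri_mem_lastColSubgroup,
      col_eq_zero_of_commute_single h₁₂ (by decide), zero_div]
  · rintro _ ⟨p, rfl⟩ _ ⟨q, rfl⟩
    simp [unitri_mul, add_comm]

theorem centralizer_firstRowSubgroup :
    Subgroup.centralizer (firstRowSubgroup F : Set PSL(3, F)) = firstRowSubgroup F := by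
  refine le_antisymm (fun k hk ↦ ?_) ?_
  · obtain ⟨g, rfl⟩ := proj_surjective k
    have hcomm (x z : F) : Commute (proj g) (unitri x 0 z) := (hk _ ⟨(x, z), rfl⟩).symm
    have h₀₂ : Commute (single 0 2 1) (g : Matrix (Fin 3) (Fin 3) F) :=
      commute_single_of_commute_unitri (by ext i j; fin_cases i <;> fin_cases j <;> rfl)
        (hcomm 0 1)
    have h₀₁ : Commute (single 0 1 1) (g : Matrix (Fin 3) (Fin 3) F) :=
      commute_single_of_commute_unitri (by ext i j; fin_cases i <;> fin_cases j <;> rfl)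
        (hcomm 1 0)
    rw [proj_eq_unitri rfl (diag_eq_of_commute_single h₀₁).symm
      (diag_eq_of_commute_single h₀₂).symm (col_eq_zero_of_commute_single h₀₂ (by decide))
      (col_eq_zero_of_commute_single h₀₂ (by decide))
      (row_eq_zero_of_commute_single h₀₂ (by decide)), unitri_mem_firstRowSubgroup,
      row_eq_zero_of_commute_single h₀₁ (by decide), zero_div]
  · rintro _ ⟨p, rfl⟩ _ ⟨q, rfl⟩
    simp [unitri_mul, add_comm]

end Unitriangular

section Weyl

variable {F : Type*} [Field F] [CharP F 2]

variable (F) in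
/-- The permutation matrices, as a subgroup of `SL(3, F)`: in characteristic two they have
determinant one. -/
def permSL : Perm (Fin 3) →* SL(3, F) where
  toFun τ := ⟨permMatrixHom τ, by
    rw [permMatrixHom_apply, det_permutation]
    obtain h | h := Int.units_eq_one_or (Perm.sign τ⁻¹) <;> simp [h, CharTwo.neg_eq]⟩
  map_one' := Subtype.ext (map_one permMatrixHom)
  map_mul' τ υ := Subtype.ext (map_mul permMatrixHom τ υ)

theorem coe_permSL_mul_mul_inv (τ : Perm (Fin 3)) (A : SL(3, F)) :
    ((permSL F τ * A * (permSL F τ)⁻¹ : SL(3, F)) : Matrix (Fin 3) (Fin 3) F) =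
      (A : Matrix (Fin 3) (Fin 3) F).submatrix τ.symm τ.symm := by
  rw [← map_inv, coe_mul, coe_mul]
  change τ⁻¹.permMatrix F * _ * (τ⁻¹⁻¹).permMatrix F = _
  rw [PEquiv.toMatrix_toPEquiv_mul, PEquiv.mul_toMatrix_toPEquiv]
  rfl

theorem permSL_mul_transvection_mul_inv (τ : Perm (Fin 3)) {i j : Fin 3} (hij : i ≠ j) (a : F) :
    permSL F τ * SpecialLinearGroup.transvection hij a * (permSL F τ)⁻¹ =
      SpecialLinearGroup.transvection (τ.injective.ne hij) a := by
  refine Subtype.ext ((coe_permSL_mul_mul_inv τ _).trans ?_)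
  change (1 + single i j a).submatrix _ _ = 1 + single _ _ a
  rw [submatrix_add, Pi.add_apply, Pi.add_apply, submatrix_one_equiv, submatrix_single_equiv]
  rfl

variable (F) in
/-- The permutation matrices in `PSL(3, F)`, representing the Weyl group `S₃`. -/
def weyl : Perm (Fin 3) →* PSL(3, F) := proj.comp (permSL F)

theorem weyl_swap_zero_one_conj (y z : F) :
    weyl F (swap 0 1) * unitri 0 y z * (weyl F (swap 0 1))⁻¹ = unitri 0 z y := by
  change proj _ * proj _ * (proj _)⁻¹ = proj _
  rw [← map_inv, ← map_mul, ← map_mul]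
  refine congrArg proj (Subtype.ext ((coe_permSL_mul_mul_inv _ _).trans ?_))
  ext i j
  fin_cases i <;> fin_cases j <;> rfl

theorem weyl_swap_one_two_conj (x z : F) :
    weyl F (swap 1 2) * unitri x 0 z * (weyl F (swap 1 2))⁻¹ = unitri z 0 x := by
  change proj _ * proj _ * (proj _)⁻¹ = proj _
  rw [← map_inv, ← map_mul, ← map_mul]
  refine congrArg proj (Subtype.ext ((coe_permSL_mul_mul_inv _ _).trans ?_))
  ext i j
  fin_cases i <;> fin_cases j <;> rfl

theorem weyl_swap_mul_self (i j : Fin 3) : weyl F (swap i j) * weyl F (swap i j) = 1 := by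
  rw [← map_mul, Equiv.swap_mul_self, map_one]

theorem weyl_mem {H : Subgroup PSL(3, F)} (h₀₁ : weyl F (swap 0 1) ∈ H)
    (h₁₂ : weyl F (swap 1 2) ∈ H) (τ : Perm (Fin 3)) : weyl F τ ∈ H := by
  have hτ : τ ∈ Submonoid.closure (Set.range fun i : Fin 2 ↦ swap i.castSucc i.succ) := by
    rw [Perm.mclosure_swap_castSucc_succ]
    exact Submonoid.mem_top τ
  refine (Submonoid.closure_le (S := (H.comap (weyl F)).toSubmonoid)).mpr ?_ hτ
  rintro _ ⟨i, rfl⟩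
  fin_cases i
  exacts [h₀₁, h₁₂]

theorem eq_top_of_unitriSubgroup_le {H : Subgroup PSL(3, F)} (hT : unitriSubgroup F ≤ H)
    (h₀₁ : weyl F (swap 0 1) ∈ H) (h₁₂ : weyl F (swap 1 2) ∈ H) : H = ⊤ := by
  refine Subgroup.comap_injective (proj_surjective (F := F)) ?_
  refine eq_top_of_forall_transvection_mem _ fun i j hij a ↦ ?_
  obtain ⟨τ, rfl, rfl⟩ : ∃ τ : Perm (Fin 3), τ 0 = i ∧ τ 1 = j := by
    revert i j
    decide
  have h01 : (0 : Fin 3) ≠ 1 := by decide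
  have hbase : SpecialLinearGroup.transvection h01 a = unitriSL a 0 0 := by
    refine Subtype.ext ?_
    change 1 + single 0 1 a = _
    ext i j
    fin_cases i <;> fin_cases j <;> simp [coe_unitriSL]
  rw [Subgroup.mem_comap, ← permSL_mul_transvection_mul_inv τ h01, map_mul, map_mul, map_inv, hbase]
  have hw : weyl F τ ∈ H := weyl_mem h₀₁ h₁₂ τ
  exact mul_mem (mul_mem hw (hT (unitri_mem_unitriSubgroup a 0 0))) (inv_mem hw)

end Weyl

section FixingT

variable {F : Type*} [Field F] [CharP F 2] {φ : MulAut PSL(3, F)}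

theorem exists_map_weyl_swap_zero_one (hφ : ∀ g ∈ unitriSubgroup F, φ g = g) :
    ∃ t : F, φ (weyl F (swap 0 1)) = weyl F (swap 0 1) * unitri 0 t t := by
  set n := weyl F (swap 0 1)
  have hk : n⁻¹ * φ n ∈ Subgroup.centralizer (lastColSubgroup F : Set PSL(3, F)) := by
    rintro _ ⟨⟨y, z⟩, rfl⟩
    refine (commute_inv_mul_map_of_map_conj_eq (hφ _ (unitri_mem_unitriSubgroup ..)) ?_).symm
    rw [weyl_swap_zero_one_conj, hφ _ (unitri_mem_unitriSubgroup ..)]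
  rw [centralizer_lastColSubgroup] at hk
  obtain ⟨⟨y, z⟩, hyz⟩ := hk
  have hn : φ n = n * unitri 0 y z := (inv_mul_eq_iff_eq_mul.mp hyz.symm)
  have hninv : n⁻¹ = n := inv_eq_of_mul_eq_one_right (weyl_swap_mul_self 0 1)
  have hsq : unitri 0 z y * unitri 0 y z = 1 :=
    calc unitri 0 z y * unitri 0 y z
        = n * unitri 0 y z * n⁻¹ * unitri 0 y z := by rw [weyl_swap_zero_one_conj]
      _ = φ (n * n) := by rw [hninv, map_mul, hn, mul_assoc]
      _ = 1 := by rw [weyl_swap_mul_self, map_one]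
  rw [unitri_mul, ← unitri_zero, unitri_inj] at hsq
  obtain rfl : z = y := CharTwo.add_eq_zero.mp hsq.2.1
  exact ⟨z, hn⟩

theorem exists_map_weyl_swap_one_two (hφ : ∀ g ∈ unitriSubgroup F, φ g = g) :
    ∃ t : F, φ (weyl F (swap 1 2)) = weyl F (swap 1 2) * unitri t 0 t := by
  set n := weyl F (swap 1 2)
  have hk : n⁻¹ * φ n ∈ Subgroup.centralizer (firstRowSubgroup F : Set PSL(3, F)) := by
    rintro _ ⟨⟨x, z⟩, rfl⟩
    refine (commute_inv_mul_map_of_map_conj_eq (hφ _ (unitri_mem_unitriSubgroup ..)) ?_).symm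
    rw [weyl_swap_one_two_conj, hφ _ (unitri_mem_unitriSubgroup ..)]
  rw [centralizer_firstRowSubgroup] at hk
  obtain ⟨⟨x, z⟩, hxz⟩ := hk
  have hn : φ n = n * unitri x 0 z := (inv_mul_eq_iff_eq_mul.mp hxz.symm)
  have hninv : n⁻¹ = n := inv_eq_of_mul_eq_one_right (weyl_swap_mul_self 1 2)
  have hsq : unitri z 0 x * unitri x 0 z = 1 :=
    calc unitri z 0 x * unitri x 0 z
        = n * unitri x 0 z * n⁻¹ * unitri x 0 z := by rw [weyl_swap_one_two_conj]
      _ = φ (n * n) := by rw [hninv, map_mul, hn, mul_assoc]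
      _ = 1 := by rw [weyl_swap_mul_self, map_one]
  rw [unitri_mul, ← unitri_zero, unitri_inj] at hsq
  obtain rfl : z = x := CharTwo.add_eq_zero.mp hsq.1
  exact ⟨z, hn⟩

theorem eq_one_of_map_weyl_swap_zero_one (hφ : ∀ g ∈ unitriSubgroup F, φ g = g)
    (hn : φ (weyl F (swap 0 1)) = weyl F (swap 0 1)) : φ = 1 := by
  obtain ⟨t, ht⟩ := exists_map_weyl_swap_one_two hφ
  have hcube : φ (weyl F (swap 0 1) * weyl F (swap 1 2)) ^ 3 = 1 := by
    have hperm : (swap 0 1 * swap 1 2 : Perm (Fin 3)) ^ 3 = 1 := by decide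
    rw [← map_mul, ← map_pow, ← map_pow, hperm, map_one, map_one]
  have ht₀ : t = 0 := by
    rw [map_mul, hn, ht, ← mul_assoc, ← map_mul] at hcube
    obtain ⟨r, hr⟩ := proj_eq_proj_iff.mp
      ((map_one proj).trans (hcube.symm.trans (map_pow proj (permSL F _ * unitriSL t 0 t) 3).symm))
    have hcycle : (permSL F (swap 0 1 * swap 1 2) * unitriSL t 0 t : Matrix (Fin 3) (Fin 3) F) =
        !![0, 0, 1; 1, t, t; 0, 1, 0] := by
      change ((swap 0 1 * swap 1 2 : Perm (Fin 3))⁻¹).permMatrix F * _ = _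
      rw [PEquiv.toMatrix_toPEquiv_mul]
      ext i j
      fin_cases i <;> fin_cases j <;> rfl
    simp only [pow_three, coe_mul, hcycle, mul_fin_three, coe_one] at hr
    simpa using congrFun (congrFun hr 0) 1
  rw [ht₀, unitri_zero, mul_one] at ht
  have htop : (φ : PSL(3, F) →* PSL(3, F)).eqLocus (MonoidHom.id _) = ⊤ :=
    eq_top_of_unitriSubgroup_le hφ hn ht
  ext g
  exact (htop ▸ Subgroup.mem_top g : g ∈ (φ : PSL(3, F) →* PSL(3, F)).eqLocus (MonoidHom.id _))

theorem mem_range_conj_of_forall_mem_unitriSubgroup (hφ : ∀ g ∈ unitriSubgroup F, φ g = g) :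
    φ ∈ (MulAut.conj (G := PSL(3, F))).range := by
  obtain ⟨t, ht⟩ := exists_map_weyl_swap_zero_one hφ
  set n := weyl F (swap 0 1)
  have hone : MulAut.conj (unitri 0 0 t) * φ = 1 := by
    refine eq_one_of_map_weyl_swap_zero_one (fun g hg ↦ ?_) ?_
    · rw [MulAut.mul_apply, hφ g hg, MulAut.conj_apply, mul_inv_eq_iff_eq_mul]
      obtain ⟨p, rfl⟩ := hg
      simp [unitri_mul, add_comm]
    · have hswap : n * unitri 0 t 0 = unitri 0 0 t * n :=
        mul_inv_eq_iff_eq_mul.mp (weyl_swap_zero_one_conj t 0)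
      rw [MulAut.mul_apply, ht, MulAut.conj_apply, mul_inv_eq_iff_eq_mul, ← mul_assoc, ← hswap,
        mul_assoc, unitri_mul]
      simp [CharTwo.add_self_eq_zero, n]
  rw [eq_inv_of_mul_eq_one_right hone]
  exact inv_mem ⟨_, rfl⟩

end FixingT

section Semilinear

variable {F : Type*} [Field F]

/-- The automorphism `φ` of `PSL(3, F)` preserves `T` and its centre and acts on `T` as the field
automorphism `σ`, followed by a diagonal automorphism (given by `a` and `b`) and a central shear
(given by `c` and `d`). -/
def IsSemilinear (φ : MulAut PSL(3, F)) (σ : F →+* F) : Prop :=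
  ∃ a b c d : F, a ≠ 0 ∧ b ≠ 0 ∧
    ∀ x y z, φ (unitri x y z) =
      unitri (a * σ x) (b * σ y) (c * σ x + d * σ y + a * b * σ z)

theorem isSemilinear_one : IsSemilinear (1 : MulAut PSL(3, F)) (RingHom.id F) :=
  ⟨1, 1, 0, 0, one_ne_zero, one_ne_zero, fun x y z ↦ by simp⟩

variable {φ ψ : MulAut PSL(3, F)} {σ τ : F →+* F}

theorem IsSemilinear.mul (hφ : IsSemilinear φ σ) (hψ : IsSemilinear ψ τ) :
    IsSemilinear (φ * ψ) (σ.comp τ) := by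
  obtain ⟨a, b, c, d, ha, hb, hφ⟩ := hφ
  obtain ⟨a', b', c', d', ha', hb', hψ⟩ := hψ
  refine ⟨a * σ a', b * σ b', c * σ a' + a * b * σ c', d * σ b' + a * b * σ d',
    mul_ne_zero ha (by simpa using ha'), mul_ne_zero hb (by simpa using hb'), fun x y z ↦ ?_⟩
  rw [MulAut.mul_apply, hψ, hφ, unitri_inj]
  simp only [map_add, map_mul, RingHom.comp_apply]
  refine ⟨?_, ?_, ?_⟩ <;> ring

theorem IsSemilinear.unique (hσ : IsSemilinear φ σ) (hτ : IsSemilinear φ τ) : σ = τ := by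
  obtain ⟨a, b, c, d, ha, -, hσ⟩ := hσ
  obtain ⟨a', b', c', d', -, -, hτ⟩ := hτ
  have h (x : F) : a * σ x = a' * τ x := (unitri_inj.mp ((hσ x 0 0).symm.trans (hτ x 0 0))).1
  obtain rfl : a = a' := by simpa using h 1
  exact RingHom.ext fun x ↦ mul_left_cancel₀ ha (h x)

theorem IsSemilinear.comp_self_eq_id (h : IsSemilinear φ σ) (hφ : φ * φ = 1) :
    σ.comp σ = RingHom.id F :=
  (h.mul h).unique (hφ ▸ isSemilinear_one)

theorem exists_forall_map_unitri (h₁ : φ • lastColSubgroup F = lastColSubgroup F)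
    (h₂ : φ • firstRowSubgroup F = firstRowSubgroup F) :
    ∃ (α : F →+ F) (β γ δ ε : F → F), α 1 ≠ 0 ∧ β 1 ≠ 0 ∧
      (∀ x y, γ (x * y) = α x * β y) ∧
      ∀ x y z, φ (unitri x y z) = unitri (α x) (β y) (ε x + δ y + γ z) := by
  have hx (x : F) : ∃ p : F × F, unitri p.1 0 p.2 = φ (unitri x 0 0) :=
    (map_mem_iff_of_smul_eq h₂).mpr (unitri_mem_firstRowSubgroup.mpr rfl)
  have hy (y : F) : ∃ p : F × F, unitri 0 p.1 p.2 = φ (unitri 0 y 0) :=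
    (map_mem_iff_of_smul_eq h₁).mpr (unitri_mem_lastColSubgroup.mpr rfl)
  have hz (z : F) : ∃ c : F, unitri 0 0 c = φ (unitri 0 0 z) :=
    exists_unitri_eq_of_mem_inf
      ⟨(map_mem_iff_of_smul_eq h₁).mpr (unitri_mem_lastColSubgroup.mpr rfl),
        (map_mem_iff_of_smul_eq h₂).mpr (unitri_mem_firstRowSubgroup.mpr rfl)⟩
  choose αε hαε using hx
  choose βδ hβδ using hy
  choose γ hγ using hz
  have hφ (x y z : F) : φ (unitri x y z) =
      unitri (αε x).1 (βδ y).1 ((αε x).2 + (βδ y).2 + γ z) := by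
    have : unitri x y z = unitri 0 y 0 * unitri x 0 0 * unitri 0 0 z := by simp [unitri_mul]
    rw [this, map_mul, map_mul, ← hαε, ← hβδ, ← hγ, unitri_mul, unitri_mul, unitri_inj]
    refine ⟨?_, ?_, ?_⟩ <;> ring
  have hα (x x' : F) : (αε (x + x')).1 = (αε x).1 + (αε x').1 := by
    have := congrArg φ (unitri_mul x 0 0 x' 0 0)
    rw [map_mul, hφ, hφ, hφ, unitri_mul] at this
    exact (unitri_inj.mp this).1.symm
  refine ⟨AddMonoidHom.mk' (fun x ↦ (αε x).1) hα, fun y ↦ (βδ y).1, γ, fun y ↦ (βδ y).2,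
    fun x ↦ (αε x).2, fun h ↦ ?_, fun h ↦ ?_, fun x y ↦ ?_, hφ⟩
  · refine one_ne_zero (α := F) (unitri_mem_lastColSubgroup (y := 0) (z := 0) |>.mp ?_)
    rw [← map_mem_iff_of_smul_eq h₁, hφ, unitri_mem_lastColSubgroup]
    exact h
  · refine one_ne_zero (α := F) (unitri_mem_firstRowSubgroup (x := 0) (z := 0) |>.mp ?_)
    rw [← map_mem_iff_of_smul_eq h₂, hφ, unitri_mem_firstRowSubgroup]
    exact h
  · have := congrArg φ (unitri_mul x 0 0 0 y 0)
    rw [map_mul, ← hαε, ← hβδ, hφ, unitri_mul, unitri_inj] at this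
    simpa using this.2.2.symm

variable [CharP F 2]

theorem exists_forall_eq_mul_of_map_unitri_zero {β γ δ : F → F} (hβ : β 1 ≠ 0) (hβ₀ : β 0 = 0)
    (hγ₀ : γ 0 = 0) (hφ : ∀ y z, φ (unitri 0 y z) = unitri 0 (β y) (δ y + γ z)) :
    ∃ d, ∀ y, δ y = d * β y := by
  obtain ⟨g, hg⟩ := proj_surjective (φ (weyl F (swap 0 1)))
  have hmat (y z : F) := mul_strictUpper_eq_of_proj_mul_unitri_eq (g := g)
    (x := 0) (y := β y) (z := δ y + γ z) (x' := 0) (y' := β z) (z' := δ z + γ y) (by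
      rw [hg, ← hφ, ← hφ, ← map_mul, ← map_mul, ← weyl_swap_zero_one_conj y z,
        inv_mul_cancel_right])
  have h₂₀ : g 2 0 = 0 := by
    simpa [mul_apply, Fin.sum_univ_three, hβ] using congrFun (congrFun (hmat 0 1) 1) 0
  have h₂₁ : g 2 1 = 0 := by
    simpa [mul_apply, Fin.sum_univ_three, hβ] using congrFun (congrFun (hmat 0 1) 1) 1
  have h₁₂ (y z : F) : g 1 0 * (δ y + γ z) + g 1 1 * β y = β z * g 2 2 := by
    simpa [mul_apply, Fin.sum_univ_three] using congrFun (congrFun (hmat y z) 1) 2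
  have h₁₀ : g 1 0 ≠ 0 := by
    intro h₁₀
    have h₂₂ : g 2 2 = 0 := by simpa [h₁₀, hβ₀, hβ] using h₁₂ 0 1
    refine one_ne_zero ((det_coe g).symm.trans ?_)
    rw [det_fin_three, h₂₀, h₂₁, h₂₂]
    ring
  refine ⟨-(g 1 1 / g 1 0), fun y ↦ ?_⟩
  have := h₁₂ y 0
  rw [hγ₀, hβ₀] at this
  field_simp
  linear_combination this

theorem exists_forall_eq_mul_of_map_unitri_middle_zero {α γ ε : F → F} (hα : α 1 ≠ 0)
    (hα₀ : α 0 = 0) (hγ₀ : γ 0 = 0)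
    (hφ : ∀ x z, φ (unitri x 0 z) = unitri (α x) 0 (ε x + γ z)) :
    ∃ c, ∀ x, ε x = c * α x := by
  obtain ⟨g, hg⟩ := proj_surjective (φ (weyl F (swap 1 2)))
  have hmat (x z : F) := mul_strictUpper_eq_of_proj_mul_unitri_eq (g := g)
    (x := α x) (y := 0) (z := ε x + γ z) (x' := α z) (y' := 0) (z' := ε z + γ x) (by
      rw [hg, ← hφ, ← hφ, ← map_mul, ← map_mul, ← weyl_swap_one_two_conj x z,
        inv_mul_cancel_right])
  have h₁₀ : g 1 0 = 0 := by
    simpa [mul_apply, Fin.sum_univ_three, hα] using congrFun (congrFun (hmat 1 0) 1) 1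
  have h₂₀ : g 2 0 = 0 := by
    simpa [mul_apply, Fin.sum_univ_three, hα] using congrFun (congrFun (hmat 1 0) 2) 1
  have h₀₁ (z : F) : α z * g 1 1 + ε z * g 2 1 = 0 := by
    simpa [mul_apply, Fin.sum_univ_three, hα₀, hγ₀, eq_comm] using
      congrFun (congrFun (hmat 0 z) 0) 1
  have h₂₁ : g 2 1 ≠ 0 := by
    intro h₂₁
    have h₁₁ : g 1 1 = 0 := by simpa [h₂₁, hα] using h₀₁ 1
    refine one_ne_zero ((det_coe g).symm.trans ?_)
    rw [det_fin_three, h₁₀, h₂₀, h₂₁, h₁₁]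
    ring
  refine ⟨-(g 1 1 / g 2 1), fun x ↦ ?_⟩
  field_simp
  linear_combination h₀₁ x

theorem exists_isSemilinear (h₁ : φ • lastColSubgroup F = lastColSubgroup F)
    (h₂ : φ • firstRowSubgroup F = firstRowSubgroup F) : ∃ σ : F →+* F, IsSemilinear φ σ := by
  obtain ⟨α, β, γ, δ, ε, hα, hβ, hγ, hφ⟩ := exists_forall_map_unitri h₁ h₂
  obtain ⟨σ, hσ⟩ := exists_ringHom_of_map_mul_eq hα hβ hγ
  have hγ₀ : γ 0 = 0 := by simp [(hσ 0).2.2]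
  have hβ₀ : β 0 = 0 := by simp [(hσ 0).2.1]
  have hεδ : ε 0 + δ 0 = 0 := by
    have := hφ 0 0 0
    rw [unitri_zero, map_one, ← unitri_zero, unitri_inj, hγ₀, add_zero] at this
    exact this.2.2.symm
  obtain ⟨d, hd⟩ := exists_forall_eq_mul_of_map_unitri_zero (δ := fun y ↦ ε 0 + δ y) hβ hβ₀ hγ₀
    fun y z ↦ by simpa using hφ 0 y z
  obtain ⟨c, hc⟩ := exists_forall_eq_mul_of_map_unitri_middle_zero (ε := fun x ↦ ε x + δ 0) hα
    (map_zero α) hγ₀ fun x z ↦ by simpa [hβ₀] using hφ x 0 z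
  refine ⟨σ, α 1, β 1, c * α 1, d * β 1, hα, hβ, fun x y z ↦ ?_⟩
  rw [hφ, unitri_inj]
  obtain ⟨hαx, -, -⟩ := hσ x
  obtain ⟨-, hβy, -⟩ := hσ y
  refine ⟨hαx, hβy, ?_⟩
  linear_combination hc x + hd y + (hσ z).2.2 + c * hαx + d * hβy - hεδ

theorem mem_range_conj_of_isSemilinear_id (h : IsSemilinear φ (RingHom.id F)) (hφ : φ * φ = 1) :
    φ ∈ (MulAut.conj (G := PSL(3, F))).range := by
  obtain ⟨a, b, c, d, -, -, h⟩ := h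
  simp only [RingHom.id_apply] at h
  have hab : a ^ 2 = 1 ∧ b ^ 2 = 1 := by
    have hsq : φ (φ (unitri 1 1 0)) = unitri 1 1 0 := DFunLike.congr_fun hφ _
    rw [h, h, unitri_inj] at hsq
    exact ⟨by simpa [sq] using hsq.1, by simpa [sq] using hsq.2.1⟩
  obtain rfl : a = 1 := CharTwo.sq_injective (by simpa using hab.1)
  obtain rfl : b = 1 := CharTwo.sq_injective (by simpa using hab.2)
  have hfix : (MulAut.conj (unitri d (-c) 0))⁻¹ * φ ∈ (MulAut.conj (G := PSL(3, F))).range := by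
    refine mem_range_conj_of_forall_mem_unitriSubgroup ?_
    rintro _ ⟨⟨x, y, z⟩, rfl⟩
    rw [MulAut.mul_apply, h, ← map_inv, MulAut.conj_apply, inv_inv, mul_assoc,
      inv_mul_eq_iff_eq_mul, unitri_mul, unitri_mul, unitri_inj]
    refine ⟨?_, ?_, ?_⟩ <;> ring
  exact ((MulAut.conj (G := PSL(3, F))).range.mul_mem_cancel_left (inv_mem ⟨_, rfl⟩)).mp hfix

end Semilinear

section FixedPoints

variable {F : Type*} [Field F]

instance [Finite F] : Finite PSL(3, F) :=
  have : Finite SL(3, F) := Subtype.finite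
  Finite.of_surjective proj proj_surjective

variable {φ : MulAut PSL(3, F)} {σ : F →+* F}

theorem IsSemilinear.exists_semilinearMap (h : IsSemilinear φ σ) :
    ∃ f : F × F × F →ₛₗ[σ] F × F × F, ∀ p : F × F × F,
      φ (unitri p.1 p.2.1 p.2.2) = unitri (f p).1 (f p).2.1 (f p).2.2 := by
  obtain ⟨a, b, c, d, -, -, h⟩ := h
  exact ⟨{
    toFun p := (a * σ p.1, b * σ p.2.1, c * σ p.1 + d * σ p.2.1 + a * b * σ p.2.2)
    map_add' p q := by ext <;> simp only [Prod.fst_add, Prod.snd_add, map_add] <;> ring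
    map_smul' r p := by
      ext <;> simp only [Prod.smul_fst, Prod.smul_snd, smul_eq_mul, map_mul] <;> ring },
    fun p ↦ h _ _ _⟩

theorem IsSemilinear.card_sq_le_of_forall_map_eq (h : IsSemilinear φ σ) (hσ : σ ≠ RingHom.id F)
    {M : Type*} [AddCommGroup M] [Module F M] [Finite M] {ι : M →ₗ[F] F × F × F}
    (hι : Function.Injective ι) {B : Subgroup PSL(3, F)} (hB : ∀ g ∈ B, φ g = g)
    (hBι : ∀ g ∈ B, ∃ m, unitri (ι m).1 (ι m).2.1 (ι m).2.2 = g) :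
    Nat.card B ^ 2 ≤ Nat.card M := by
  obtain ⟨f, hf⟩ := h.exists_semilinearMap
  refine le_trans (Nat.pow_le_pow_left ?_ 2)
    (ncard_setOf_eq_sq_le_of_semilinear hσ (f.comp ι) hι)
  refine le_trans (Set.ncard_le_ncard (fun g hg ↦ ?_) ((Set.toFinite _).image _))
    (Set.ncard_image_le (f := fun m ↦ unitri (ι m).1 (ι m).2.1 (ι m).2.2) (Set.toFinite _))
  obtain ⟨m, rfl⟩ := hBι g hg
  obtain ⟨h₁, h₂, h₃⟩ := unitri_inj.mp ((hf (ι m)).symm.trans (hB _ hg))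
  exact ⟨m, Prod.ext h₁ (Prod.ext h₂ h₃), rfl⟩

variable {B : Subgroup PSL(3, F)}

variable [Finite F]

theorem card_le_of_le_inf (hB : B ≤ lastColSubgroup F ⊓ firstRowSubgroup F) :
    Nat.card B ≤ Nat.card F := by
  have hinj : Function.Injective fun z : F ↦ unitri 0 0 z := fun z z' h ↦ (unitri_inj.mp h).2.2
  rw [← Nat.card_range_of_injective hinj]
  exact Nat.card_mono (Set.toFinite _) fun g hg ↦ exists_unitri_eq_of_mem_inf (hB hg)

theorem IsSemilinear.card_sq_le_of_le_inf (h : IsSemilinear φ σ) (hσ : σ ≠ RingHom.id F)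
    (hB : B ≤ lastColSubgroup F ⊓ firstRowSubgroup F) (hφB : ∀ g ∈ B, φ g = g) :
    Nat.card B ^ 2 ≤ Nat.card F :=
  h.card_sq_le_of_forall_map_eq hσ (ι := LinearMap.inr F F (F × F) ∘ₗ LinearMap.inr F F F)
    (LinearMap.inr_injective.comp LinearMap.inr_injective) hφB
    fun _ hg ↦ exists_unitri_eq_of_mem_inf (hB hg)

theorem IsSemilinear.card_le_of_le_or_le (h : IsSemilinear φ σ) (hσ : σ ≠ RingHom.id F)
    (hB : B ≤ lastColSubgroup F ∨ B ≤ firstRowSubgroup F) (hφB : ∀ g ∈ B, φ g = g) :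
    Nat.card B ≤ Nat.card F := by
  rw [← Nat.pow_le_pow_iff_left two_ne_zero, pow_two (Nat.card F), ← Nat.card_prod]
  rcases hB with hB | hB
  · exact h.card_sq_le_of_forall_map_eq hσ (ι := LinearMap.inr F F (F × F))
      LinearMap.inr_injective hφB hB
  · exact h.card_sq_le_of_forall_map_eq hσ
      (ι := LinearMap.prodMap LinearMap.id (LinearMap.inr F F F))
      (Function.injective_id.prodMap LinearMap.inr_injective) hφB hB

end FixedPoints

section ElementaryAbelian

variable {F : Type*} [Field F]

theorem card_unitriSubgroup : Nat.card (unitriSubgroup F) = Nat.card F ^ 3 := by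
  rw [pow_three, ← Nat.card_prod, ← Nat.card_prod]
  refine Nat.card_range_of_injective fun p q h ↦ ?_
  obtain ⟨h₁, h₂, h₃⟩ := unitri_inj.mp h
  exact Prod.ext h₁ (Prod.ext h₂ h₃)

theorem card_lastColSubgroup : Nat.card (lastColSubgroup F) = Nat.card F ^ 2 := by
  rw [pow_two, ← Nat.card_prod]
  refine Nat.card_range_of_injective fun p q h ↦ ?_
  obtain ⟨-, h₁, h₂⟩ := unitri_inj.mp h
  exact Prod.ext h₁ h₂

theorem card_firstRowSubgroup : Nat.card (firstRowSubgroup F) = Nat.card F ^ 2 := by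
  rw [pow_two, ← Nat.card_prod]
  refine Nat.card_range_of_injective fun p q h ↦ ?_
  obtain ⟨h₁, -, h₂⟩ := unitri_inj.mp h
  exact Prod.ext h₁ h₂

theorem lastColSubgroup_le_unitriSubgroup : lastColSubgroup F ≤ unitriSubgroup F := by
  rintro _ ⟨p, rfl⟩
  exact unitri_mem_unitriSubgroup _ _ _

theorem firstRowSubgroup_le_unitriSubgroup : firstRowSubgroup F ≤ unitriSubgroup F := by
  rintro _ ⟨p, rfl⟩
  exact unitri_mem_unitriSubgroup _ _ _

theorem lastColSubgroup_ne_firstRowSubgroup : lastColSubgroup F ≠ firstRowSubgroup F := by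
  intro h
  have hmem : unitri 0 1 0 ∈ lastColSubgroup F := unitri_mem_lastColSubgroup.mpr rfl
  rw [h, unitri_mem_firstRowSubgroup] at hmem
  exact one_ne_zero hmem

variable [CharP F 2] {E : Subgroup PSL(3, F)}

theorem unitri_mul_self_eq_one {x y z : F} : unitri x y z * unitri x y z = 1 ↔ x = 0 ∨ y = 0 := by
  rw [unitri_mul, ← unitri_zero, unitri_inj]
  simp only [CharTwo.add_self_eq_zero, true_and, zero_add, mul_eq_zero]

theorem mul_self_eq_one_of_mem_lastColSubgroup {g : PSL(3, F)} (hg : g ∈ lastColSubgroup F) :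
    g * g = 1 := by
  obtain ⟨p, rfl⟩ := hg
  exact unitri_mul_self_eq_one.mpr (Or.inl rfl)

theorem mul_self_eq_one_of_mem_firstRowSubgroup {g : PSL(3, F)} (hg : g ∈ firstRowSubgroup F) :
    g * g = 1 := by
  obtain ⟨p, rfl⟩ := hg
  exact unitri_mul_self_eq_one.mpr (Or.inr rfl)

theorem le_or_le_of_le_unitriSubgroup (hE : E ≤ unitriSubgroup F) (hE₂ : ∀ g ∈ E, g * g = 1) :
    E ≤ lastColSubgroup F ∨ E ≤ firstRowSubgroup F := by
  by_contra! hcon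
  obtain ⟨⟨g, hg, hg₁⟩, k, hk, hk₂⟩ := hcon.imp SetLike.not_le_iff_exists.mp
    SetLike.not_le_iff_exists.mp
  obtain ⟨⟨x, y, z⟩, rfl⟩ := hE hg
  obtain ⟨⟨x', y', z'⟩, rfl⟩ := hE hk
  have hx : x ≠ 0 := mt unitri_mem_lastColSubgroup.mpr hg₁
  have hy' : y' ≠ 0 := mt unitri_mem_firstRowSubgroup.mpr hk₂
  have hy : y = 0 := (unitri_mul_self_eq_one.mp (hE₂ _ hg)).resolve_left hx
  have hx' : x' = 0 := (unitri_mul_self_eq_one.mp (hE₂ _ hk)).resolve_right hy'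
  have hprod := hE₂ _ (mul_mem hg hk)
  rw [unitri_mul, unitri_mul_self_eq_one] at hprod
  simp [hx, hy, hx', hy'] at hprod

variable [Finite F] {φ : MulAut PSL(3, F)}

theorem eq_or_eq_of_card_eq (hE : E ≤ unitriSubgroup F) (hE₂ : ∀ g ∈ E, g * g = 1)
    (hcard : Nat.card E = Nat.card F ^ 2) : E = lastColSubgroup F ∨ E = firstRowSubgroup F :=
  (le_or_le_of_le_unitriSubgroup hE hE₂).imp
    (Subgroup.eq_of_le_of_card_ge · (by rw [hcard, card_lastColSubgroup]))
    (Subgroup.eq_of_le_of_card_ge · (by rw [hcard, card_firstRowSubgroup]))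

theorem smul_eq_or_eq_of_card_eq (hφ : φ • unitriSubgroup F = unitriSubgroup F)
    (hE : E ≤ unitriSubgroup F) (hE₂ : ∀ g ∈ E, g * g = 1)
    (hcard : Nat.card E = Nat.card F ^ 2) :
    φ • E = lastColSubgroup F ∨ φ • E = firstRowSubgroup F := by
  refine eq_or_eq_of_card_eq ?_ ?_ ?_
  · rw [← hφ]
    exact Subgroup.pointwise_smul_le_pointwise_smul_iff.mpr hE
  · rintro _ ⟨g, hg, rfl⟩
    exact (map_mul φ g g).symm.trans ((congrArg φ (hE₂ g hg)).trans (map_one φ))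
  · rw [← hcard]
    exact Nat.card_congr (Subgroup.equivSMul φ E).symm.toEquiv

theorem smul_eq_self_or_swap (hφ : φ • unitriSubgroup F = unitriSubgroup F) :
    (φ • lastColSubgroup F = lastColSubgroup F ∧ φ • firstRowSubgroup F = firstRowSubgroup F) ∨
      (φ • lastColSubgroup F = firstRowSubgroup F ∧
        φ • firstRowSubgroup F = lastColSubgroup F) := by
  have hne : φ • lastColSubgroup F ≠ φ • firstRowSubgroup F :=
    (MulAction.injective φ).ne lastColSubgroup_ne_firstRowSubgroup
  have hlast := smul_eq_or_eq_of_card_eq hφ lastColSubgroup_le_unitriSubgroup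
    (fun _ ↦ mul_self_eq_one_of_mem_lastColSubgroup) card_lastColSubgroup
  have hfirst := smul_eq_or_eq_of_card_eq hφ firstRowSubgroup_le_unitriSubgroup
    (fun _ ↦ mul_self_eq_one_of_mem_firstRowSubgroup) card_firstRowSubgroup
  grind

theorem smul_firstRowSubgroup_eq (hφ : φ • unitriSubgroup F = unitriSubgroup F)
    (h : φ • lastColSubgroup F = lastColSubgroup F) :
    φ • firstRowSubgroup F = firstRowSubgroup F := by
  rcases smul_eq_self_or_swap hφ with hself | hswap
  · exact hself.2
  · exact absurd (h.symm.trans hswap.1) lastColSubgroup_ne_firstRowSubgroup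

theorem card_le_two_mul_card_stabilizer_inf {A : Subgroup (MulAut PSL(3, F))}
    (hAn : ∀ φ ∈ A, φ • unitriSubgroup F = unitriSubgroup F) :
    Nat.card A ≤
      2 * Nat.card ↥(MulAction.stabilizer (MulAut PSL(3, F)) (lastColSubgroup F) ⊓ A) := by
  refine card_le_two_mul_card_inf fun φ hφ hφ' ψ hψ hψ' ↦ ?_
  obtain ⟨-, hφ₂⟩ := (smul_eq_self_or_swap (hAn φ hφ)).resolve_left fun h ↦ hφ' h.1
  obtain ⟨hψ₁, -⟩ := (smul_eq_self_or_swap (hAn ψ hψ)).resolve_left fun h ↦ hψ' h.1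
  rw [MulAction.mem_stabilizer_iff, mul_smul, hψ₁, hφ₂]

end ElementaryAbelian

variable {F : Type*} [Field F]

theorem conj_injective : Function.Injective (MulAut.conj (G := PSL(3, F))) :=
  mulAut_conj_injective (center_projectiveSpecialLinearGroup (by simp))

section ElementaryAbelian

variable {A : Subgroup (MulAut PSL(3, F))}

theorem card_range_conj_inf :
    Nat.card ↥((MulAut.conj (G := PSL(3, F))).range ⊓ A) = Nat.card (A.comap MulAut.conj) := by
  rw [← Subgroup.map_comap_eq, Subgroup.card_map_of_injective conj_injective]

theorem apply_eq_self_of_mem_comap_conj (hA : ∀ φ ∈ A, φ * φ = 1)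
    {φ : MulAut PSL(3, F)} (hφ : φ ∈ A) {g : PSL(3, F)}
    (hg : g ∈ A.comap MulAut.conj) : φ g = g :=
  apply_eq_self_of_commute_conj (center_projectiveSpecialLinearGroup (by simp))
    (commute_of_forall_mul_self_eq_one hA hφ hg)

variable [CharP F 2]

theorem comap_conj_le_or_le (hA : ∀ φ ∈ A, φ * φ = 1)
    (hAT : A.comap MulAut.conj ≤ unitriSubgroup F) :
    A.comap MulAut.conj ≤ lastColSubgroup F ∨ A.comap MulAut.conj ≤ firstRowSubgroup F :=
  le_or_le_of_le_unitriSubgroup hAT fun g hg ↦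
    conj_injective (by rw [map_mul, map_one]; exact hA _ hg)

theorem comap_conj_le_inf_of_swap (hA : ∀ φ ∈ A, φ * φ = 1)
    (hAT : A.comap MulAut.conj ≤ unitriSubgroup F)
    {φ : MulAut PSL(3, F)} (hφ : φ ∈ A)
    (h₁ : φ • lastColSubgroup F = firstRowSubgroup F)
    (h₂ : φ • firstRowSubgroup F = lastColSubgroup F) :
    A.comap MulAut.conj ≤ lastColSubgroup F ⊓ firstRowSubgroup F := by
  have hmem {E : Subgroup PSL(3, F)} (hE : A.comap MulAut.conj ≤ E) :
      A.comap MulAut.conj ≤ φ • E := fun g hg ↦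
    ⟨g, hE hg, apply_eq_self_of_mem_comap_conj hA hφ hg⟩
  rcases comap_conj_le_or_le hA hAT with hB | hB
  · exact le_inf hB (h₁ ▸ hmem hB)
  · exact le_inf (h₂ ▸ hmem hB) hB

theorem exists_isSemilinear_of_notMem_range_conj (hA : ∀ φ ∈ A, φ * φ = 1)
    {φ : MulAut PSL(3, F)} (hφA : φ ∈ A)
    (h₁ : φ • lastColSubgroup F = lastColSubgroup F)
    (h₂ : φ • firstRowSubgroup F = firstRowSubgroup F)
    (hφ : φ ∉ (MulAut.conj (G := PSL(3, F))).range) :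
    ∃ σ, IsSemilinear φ σ ∧ σ ≠ RingHom.id F := by
  obtain ⟨σ, hσ⟩ := exists_isSemilinear h₁ h₂
  exact ⟨σ, hσ, by rintro rfl; exact hφ (mem_range_conj_of_isSemilinear_id hσ (hA φ hφA))⟩

variable [Finite F]

theorem card_le_two_mul_card_comap_conj (hA : ∀ φ ∈ A, φ * φ = 1)
    (h₁ : ∀ φ ∈ A, φ • lastColSubgroup F = lastColSubgroup F)
    (h₂ : ∀ φ ∈ A, φ • firstRowSubgroup F = firstRowSubgroup F) :
    Nat.card A ≤ 2 * Nat.card (A.comap MulAut.conj) := by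
  rw [← card_range_conj_inf]
  refine card_le_two_mul_card_inf fun φ hφ hφ' ψ hψ hψ' ↦ ?_
  obtain ⟨σ, hσ, hσ₁⟩ :=
    exists_isSemilinear_of_notMem_range_conj hA hφ (h₁ φ hφ) (h₂ φ hφ) hφ'
  obtain ⟨τ, hτ, hτ₁⟩ :=
    exists_isSemilinear_of_notMem_range_conj hA hψ (h₁ ψ hψ) (h₂ ψ hψ) hψ'
  have hσσ := hσ.comp_self_eq_id (hA φ hφ)
  obtain rfl := ringHom_eq_of_comp_self_eq_id hσσ (hτ.comp_self_eq_id (hA ψ hψ)) hσ₁ hτ₁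
  have hφψ := hσ.mul hτ
  rw [hσσ] at hφψ
  exact mem_range_conj_of_isSemilinear_id hφψ (hA _ (mul_mem hφ hψ))

theorem le_range_conj_of_forall_smul_eq (hA : ∀ φ ∈ A, φ * φ = 1)
    (hq : 4 ≤ Nat.card F)
    (hAT : A.comap MulAut.conj ≤ unitriSubgroup F) (hcard : Nat.card A = Nat.card F ^ 2)
    (h₁ : ∀ φ ∈ A, φ • lastColSubgroup F = lastColSubgroup F)
    (h₂ : ∀ φ ∈ A, φ • firstRowSubgroup F = firstRowSubgroup F) :
    A ≤ (MulAut.conj (G := PSL(3, F))).range := by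
  intro φ hφ
  by_contra hφ'
  obtain ⟨σ, hσ, hσ₁⟩ :=
    exists_isSemilinear_of_notMem_range_conj hA hφ (h₁ φ hφ) (h₂ φ hφ) hφ'
  have hfixed : Nat.card (A.comap MulAut.conj) ≤ Nat.card F :=
    hσ.card_le_of_le_or_le hσ₁ (comap_conj_le_or_le hA hAT)
      fun _ ↦ apply_eq_self_of_mem_comap_conj hA hφ
  have hindex := card_le_two_mul_card_comap_conj hA h₁ h₂
  nlinarith

theorem card_lt_sq_of_swap (hA : ∀ φ ∈ A, φ * φ = 1)
    (hq : 4 ≤ Nat.card F)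
    (hAT : A.comap MulAut.conj ≤ unitriSubgroup F)
    (hAn : ∀ φ ∈ A, φ • unitriSubgroup F = unitriSubgroup F)
    {φ : MulAut PSL(3, F)} (hφ : φ ∈ A) (hφ₁ : φ • lastColSubgroup F ≠ lastColSubgroup F) :
    Nat.card A < Nat.card F ^ 2 := by
  set K := MulAction.stabilizer (MulAut PSL(3, F)) (lastColSubgroup F) ⊓ A
  have hKA : Nat.card A ≤ 2 * Nat.card K := card_le_two_mul_card_stabilizer_inf hAn
  have hK (ψ) (hψ : ψ ∈ K) : ψ * ψ = 1 := hA ψ hψ.2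
  have hK₁ (ψ) (hψ : ψ ∈ K) : ψ • lastColSubgroup F = lastColSubgroup F := hψ.1
  have hK₂ (ψ) (hψ : ψ ∈ K) : ψ • firstRowSubgroup F = firstRowSubgroup F :=
    smul_firstRowSubgroup_eq (hAn ψ hψ.2) (hK₁ ψ hψ)
  have hB : K.comap MulAut.conj ≤ lastColSubgroup F ⊓ firstRowSubgroup F := by
    obtain ⟨h₁, h₂⟩ := (smul_eq_self_or_swap (hAn φ hφ)).resolve_left fun h ↦ hφ₁ h.1
    exact (Subgroup.comap_mono inf_le_right).trans (comap_conj_le_inf_of_swap hA hAT hφ h₁ h₂)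
  by_cases hKinn : K ≤ (MulAut.conj (G := PSL(3, F))).range
  · have hKcard : Nat.card K ≤ Nat.card F := by
      rw [← inf_eq_right.mpr hKinn, card_range_conj_inf]
      exact card_le_of_le_inf hB
    nlinarith
  · obtain ⟨ψ, hψ, hψ'⟩ := SetLike.not_le_iff_exists.mp hKinn
    obtain ⟨σ, hσ, hσ₁⟩ :=
      exists_isSemilinear_of_notMem_range_conj hK hψ (hK₁ ψ hψ) (hK₂ ψ hψ) hψ'
    have hfixed : Nat.card (K.comap MulAut.conj) ^ 2 ≤ Nat.card F :=
      hσ.card_sq_le_of_le_inf hσ₁ hB fun _ ↦ apply_eq_self_of_mem_comap_conj hK hψ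
    have hindex := card_le_two_mul_card_comap_conj hK hK₁ hK₂
    have hlt : Nat.card (K.comap MulAut.conj) < Nat.card F := by nlinarith
    nlinarith

theorem le_range_conj_of_card_eq (hA : ∀ φ ∈ A, φ * φ = 1)
    (hq : 4 ≤ Nat.card F)
    (hAT : A.comap MulAut.conj ≤ unitriSubgroup F)
    (hAn : ∀ φ ∈ A, φ • unitriSubgroup F = unitriSubgroup F)
    (hcard : Nat.card A = Nat.card F ^ 2) :
    A ≤ (MulAut.conj (G := PSL(3, F))).range := by
  have h₁ (φ) (hφ : φ ∈ A) : φ • lastColSubgroup F = lastColSubgroup F := by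
    by_contra hφ₁
    exact (card_lt_sq_of_swap hA hq hAT hAn hφ hφ₁).ne hcard
  exact le_range_conj_of_forall_smul_eq hA hq hAT hcard h₁ fun φ hφ ↦
    smul_firstRowSubgroup_eq (hAn φ hφ) (h₁ φ hφ)

end ElementaryAbelian

section Sylow

variable {F : Type*} [Field F]

theorem card_dvd [Finite F] : Nat.card PSL(3, F) ∣
    Nat.card F ^ 3 * ((Nat.card F ^ 3 - 1) * (Nat.card F ^ 2 - 1) * (Nat.card F - 1)) := by
  let := Fintype.ofFinite F
  have hquot : Nat.card PSL(3, F) ∣ Nat.card SL(3, F) := Subgroup.card_quotient_dvd_card _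
  have hGL : Nat.card SL(3, F) ∣ Nat.card (GL (Fin 3) F) :=
    Subgroup.card_dvd_of_injective toGL toGL_injective
  have hcard : Nat.card (GL (Fin 3) F) =
      Nat.card F ^ 3 * ((Nat.card F ^ 3 - 1) * (Nat.card F ^ 2 - 1) * (Nat.card F - 1)) := by
    rw [card_GL_field, Nat.card_eq_fintype_card, Fin.prod_univ_three]
    generalize Fintype.card F = q
    have h₁ : q ^ 3 - q = q * (q ^ 2 - 1) := by rw [Nat.mul_sub]; ring_nf
    have h₂ : q ^ 3 - q ^ 2 = q ^ 2 * (q - 1) := by rw [Nat.mul_sub]; ring_nf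
    simp only [Fin.val_zero, Fin.val_one, Fin.val_two, pow_zero, pow_one, h₁, h₂]
    ring
  exact hcard ▸ hquot.trans hGL

theorem lastColSubgroup_sup_firstRowSubgroup :
    lastColSubgroup F ⊔ firstRowSubgroup F = unitriSubgroup F := by
  refine le_antisymm
    (sup_le lastColSubgroup_le_unitriSubgroup firstRowSubgroup_le_unitriSubgroup) ?_
  rintro _ ⟨⟨x, y, z⟩, rfl⟩
  have hprod : unitri 0 y z * unitri x 0 0 = unitri x y z := by simp [unitri_mul]
  change unitri x y z ∈ _
  rw [← hprod]
  exact Subgroup.mul_mem_sup (unitri_mem_lastColSubgroup.mpr rfl)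
    (unitri_mem_firstRowSubgroup.mpr rfl)

variable [Finite F] [CharP F 2]

theorem isPGroup_unitriSubgroup : IsPGroup 2 (unitriSubgroup F) := by
  let := Fintype.ofFinite F
  obtain ⟨n, -, hn⟩ := FiniteField.card F 2
  refine IsPGroup.of_card (n := n * 3) ?_
  rw [card_unitriSubgroup, Nat.card_eq_fintype_card, hn, pow_mul]

theorem eq_unitriSubgroup_of_isPGroup {K : Subgroup PSL(3, F)} (hK : IsPGroup 2 K)
    (hTK : unitriSubgroup F ≤ K) : K = unitriSubgroup F := by
  refine (Subgroup.eq_of_le_of_card_ge hTK ?_).symm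
  rw [card_unitriSubgroup]
  obtain ⟨m, hm⟩ := IsPGroup.iff_card.mp hK
  have hcoprime : Nat.Coprime (Nat.card K)
      ((Nat.card F ^ 3 - 1) * (Nat.card F ^ 2 - 1) * (Nat.card F - 1)) := by
    have heven : Even (Nat.card F) := by
      let := Fintype.ofFinite F
      rw [Nat.card_eq_fintype_card]
      exact Nat.even_iff.mpr (FiniteField.even_card_of_char_two (ringChar.eq F 2))
    have hodd {n : ℕ} (hn : n ≠ 0) : Odd (Nat.card F ^ n - 1) :=
      Nat.Even.sub_odd (Nat.one_le_pow _ _ Nat.card_pos) (heven.pow_of_ne_zero hn) odd_one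
    rw [hm]
    refine Nat.Coprime.pow_left _ (Nat.coprime_two_left.mpr ?_)
    exact ((hodd three_ne_zero).mul (hodd two_ne_zero)).mul (by simpa using hodd one_ne_zero)
  exact Nat.le_of_dvd (pow_pos Nat.card_pos 3)
    (hcoprime.dvd_of_dvd_mul_right ((Subgroup.card_subgroup_dvd_card K).trans card_dvd))

theorem comap_conj_eq_unitriSubgroup {P : Subgroup (MulAut PSL(3, F))} (hP : IsPGroup 2 P)
    (hTP : (unitriSubgroup F).map MulAut.conj ≤ P) : P.comap MulAut.conj = unitriSubgroup F :=
  eq_unitriSubgroup_of_isPGroup (hP.comap_of_injective _ conj_injective)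
    (Subgroup.map_le_iff_le_comap.mp hTP)

variable (F) in
theorem exists_sylow_map_conj_le :
    ∃ P : Sylow 2 (MulAut PSL(3, F)), (unitriSubgroup F).map MulAut.conj ≤ P :=
  (isPGroup_unitriSubgroup.map _).exists_le_sylow

theorem smul_unitriSubgroup_eq {P : Subgroup (MulAut PSL(3, F))} (hP : IsPGroup 2 P)
    (hTP : (unitriSubgroup F).map MulAut.conj ≤ P) {φ : MulAut PSL(3, F)} (hφ : φ ∈ P) :
    φ • unitriSubgroup F = unitriSubgroup F := by
  rw [← comap_conj_eq_unitriSubgroup hP hTP, ← comap_conj_smul,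
    Subgroup.conj_smul_eq_self_of_mem hφ]

theorem exists_comap_conj_eq_smul_unitriSubgroup (S : Sylow 2 (MulAut PSL(3, F))) :
    ∃ φ : MulAut PSL(3, F),
      (S : Subgroup (MulAut PSL(3, F))).comap MulAut.conj = φ • unitriSubgroup F := by
  obtain ⟨P, hTP⟩ := exists_sylow_map_conj_le F
  obtain ⟨φ, rfl⟩ := MulAction.exists_smul_eq (MulAut PSL(3, F)) P S
  refine ⟨φ, ?_⟩
  rw [← comap_conj_eq_unitriSubgroup P.isPGroup' hTP, ← comap_conj_smul]
  rfl

theorem nonempty_unitriSubgroup_equiv (S : Sylow 2 (MulAut PSL(3, F))) :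
    Nonempty (unitriSubgroup F ≃*
      ↥((S : Subgroup (MulAut PSL(3, F))) ⊓ (MulAut.conj (G := PSL(3, F))).range)) := by
  obtain ⟨φ, hφ⟩ := exists_comap_conj_eq_smul_unitriSubgroup S
  rw [inf_comm, ← Subgroup.map_comap_eq, hφ]
  exact ⟨(Subgroup.equivSMul φ _).trans (Subgroup.equivMapOfInjective _ _ conj_injective)⟩

theorem le_range_conj_of_mul_self_eq_one (hq : 4 ≤ Nat.card F)
    {A : Subgroup (MulAut PSL(3, F))} (hA : ∀ φ ∈ A, φ * φ = 1)
    (hcard : Nat.card A = Nat.card F ^ 2) : A ≤ (MulAut.conj (G := PSL(3, F))).range := by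
  obtain ⟨P, hTP⟩ := exists_sylow_map_conj_le F
  have hAp : IsPGroup 2 A := fun φ ↦
    ⟨1, Subtype.ext ((pow_two _).trans (hA φ φ.2))⟩
  obtain ⟨Q, hAQ⟩ := hAp.exists_le_sylow
  obtain ⟨φ, rfl⟩ := MulAction.exists_smul_eq (MulAut PSL(3, F)) Q P
  have hAφ : MulAut.conj φ • A ≤ (φ • Q : Sylow 2 (MulAut PSL(3, F))) :=
    Subgroup.pointwise_smul_le_pointwise_smul_iff.mpr hAQ
  have hle : MulAut.conj φ • A ≤ (MulAut.conj (G := PSL(3, F))).range := by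
    refine le_range_conj_of_card_eq ?_ hq ?_ (fun ψ hψ ↦ ?_) ?_
    · rintro _ ⟨ψ, hψ, rfl⟩
      exact (map_mul _ ψ ψ).symm.trans ((congrArg _ (hA ψ hψ)).trans (map_one _))
    · rw [← comap_conj_eq_unitriSubgroup (φ • Q).isPGroup' hTP]
      exact Subgroup.comap_mono hAφ
    · exact smul_unitriSubgroup_eq (φ • Q).isPGroup' hTP (hAφ hψ)
    · rw [← hcard]
      exact Nat.card_congr (Subgroup.equivSMul _ A).symm.toEquiv
  rwa [← Subgroup.Normal.conj_smul_eq_self φ (MulAut.conj (G := PSL(3, F))).range,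
    Subgroup.pointwise_smul_le_pointwise_smul_iff] at hle

theorem range_le_range_conj_of_injective (hq : 4 ≤ Nat.card F)
    {θ : unitriSubgroup F →* MulAut PSL(3, F)} (hθ : Function.Injective θ) :
    θ.range ≤ (MulAut.conj (G := PSL(3, F))).range := by
  have himage {E : Subgroup PSL(3, F)} (hE : E ≤ unitriSubgroup F) (hE₂ : ∀ g ∈ E, g * g = 1)
      (hcard : Nat.card E = Nat.card F ^ 2) :
      (E.subgroupOf (unitriSubgroup F)).map θ ≤ (MulAut.conj (G := PSL(3, F))).range := by
    refine le_range_conj_of_mul_self_eq_one hq ?_ ?_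
    · rintro _ ⟨g, hg, rfl⟩
      rw [← map_mul, Subtype.ext (a1 := g * g) (a2 := 1) (hE₂ g hg), map_one]
    · rw [Subgroup.card_map_of_injective hθ, ← hcard]
      exact Nat.card_congr (Subgroup.subgroupOfEquivOfLe hE).toEquiv
  have htop : (lastColSubgroup F).subgroupOf (unitriSubgroup F) ⊔
      (firstRowSubgroup F).subgroupOf (unitriSubgroup F) = ⊤ := by
    rw [← Subgroup.subgroupOf_sup lastColSubgroup_le_unitriSubgroup
      firstRowSubgroup_le_unitriSubgroup, lastColSubgroup_sup_firstRowSubgroup,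
      Subgroup.subgroupOf_self]
  rw [MonoidHom.range_eq_map, ← htop, Subgroup.map_sup]
  exact sup_le
    (himage lastColSubgroup_le_unitriSubgroup (fun _ ↦ mul_self_eq_one_of_mem_lastColSubgroup)
      card_lastColSubgroup)
    (himage firstRowSubgroup_le_unitriSubgroup (fun _ ↦ mul_self_eq_one_of_mem_firstRowSubgroup)
      card_firstRowSubgroup)

theorem eq_inf_range_conj_of_equiv (hq : 4 ≤ Nat.card F) (S : Sylow 2 (MulAut PSL(3, F)))
    {U : Subgroup (MulAut PSL(3, F))} (hU : U ≤ S)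
    (f : U ≃* ↥((S : Subgroup (MulAut PSL(3, F))) ⊓ (MulAut.conj (G := PSL(3, F))).range)) :
    U = (S : Subgroup (MulAut PSL(3, F))) ⊓ (MulAut.conj (G := PSL(3, F))).range := by
  obtain ⟨e⟩ := nonempty_unitriSubgroup_equiv S
  have hrange : (U.subtype.comp (e.trans f.symm).toMonoidHom).range = U := by
    rw [MonoidHom.range_comp, MonoidHom.range_eq_top.mpr (e.trans f.symm).surjective,
      ← MonoidHom.range_eq_map, Subgroup.range_subtype]
  refine Subgroup.eq_of_le_of_card_ge (le_inf hU ?_) (Nat.card_congr f.toEquiv).ge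
  rw [← hrange]
  exact range_le_range_conj_of_injective hq
    (U.subtype_injective.comp (e.trans f.symm).injective)

end Sylow

end PSL3

theorem sylow_unique_in_aut_PSL3 (a : ℕ) (ha : 2 ≤ a)
    (S : Sylow 2 (MulAut (PSL3 a)))
    (U : Subgroup (MulAut (PSL3 a))) (hU : U ≤ (S : Subgroup (MulAut (PSL3 a))))
    (hiso : Nonempty
      (↥U ≃* ↥((S : Subgroup (MulAut (PSL3 a))) ⊓ genFitting (MulAut (PSL3 a))))) :
    U = (S : Subgroup (MulAut (PSL3 a))) ⊓ genFitting (MulAut (PSL3 a)) := by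
  have : IsSimpleGroup (PSL3 a) := isSimpleGroup_projectiveSpecialLinearGroup (by simp)
  have hcenter : Subgroup.center (PSL3 a) = ⊥ :=
    center_projectiveSpecialLinearGroup (by simp)
  have hq : 4 ≤ Nat.card (GaloisField 2 a) := by
    rw [GaloisField.card 2 a (by omega)]
    exact Nat.pow_le_pow_right two_pos ha
  rw [genFitting_mulAut hcenter] at hiso ⊢
  obtain ⟨f⟩ := hiso
  exact PSL3.eq_inf_range_conj_of_equiv hq S hU f
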